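/- Let I be a homogeneous ideal of projective dimension d ≥ 0 in k[x_0,...,x_n] over a field k. Then for all m ≥ 1, the Hilbert function satisfies h_I(m) ≥ C(m+d+1, d+1) − C(m − deg I + d + 1, d+1). -/

import Mathlib

open MvPolynomial

/-- Integer-valued binomial coefficient `C(a, b)`, zero when `a < 0` or `a < b`. -/
def ichoose (a : ℤ) (b : ℕ) : ℤ := if a < 0 then 0 else (a.toNat).choose b

/-- The Hilbert function of a (homogeneous) ideal `I ⊆ k[x₀, …, xₙ]`:
`m ↦ dim_k (k[x₀, …, xₙ]/I)_m`. -/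
noncomputable def hilbF (k : Type*) [Field k] {n : ℕ}
    (I : Ideal (MvPolynomial (Fin (n+1)) k)) (m : ℕ) : ℕ :=
  Module.finrank k ((homogeneousSubmodule (Fin (n+1)) k m).map
    (Ideal.Quotient.mkₐ k I).toLinearMap)

open scoped Classical in
/-- The Hilbert polynomial of `I` (the polynomial agreeing with the Hilbert
function for all large `m`; junk value `0` if none exists). -/
noncomputable def hilbP (k : Type*) [Field k] {n : ℕ}
    (I : Ideal (MvPolynomial (Fin (n+1)) k)) : Polynomial ℚ :=
  if h : ∃ P : Polynomial ℚ, ∀ᶠ m : ℕ in Filter.atTop,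
      (hilbF k I m : ℚ) = P.eval (m : ℚ) then h.choose else 0

/-- The (algebraic) degree of a homogeneous ideal `I` of projective dimension
`d ≥ 0`: `d! · (leading coefficient of its Hilbert polynomial)`. -/
noncomputable def idealDeg (k : Type*) [Field k] {n : ℕ}
    (I : Ideal (MvPolynomial (Fin (n+1)) k)) : ℕ :=
  ⌊((hilbP k I).natDegree.factorial : ℚ) * (hilbP k I).leadingCoeff⌋₊

/-- The projective dimension of a homogeneous ideal `I` (of dimension `≥ 0`):
the degree of its Hilbert polynomial. -/
noncomputable def idealDim (k : Type*) [Field k] {n : ℕ}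
    (I : Ideal (MvPolynomial (Fin (n+1)) k)) : ℕ :=
  (hilbP k I).natDegree

/-- A homogeneous ideal: one containing all homogeneous components of its elements. -/
def IsHomogeneousIdeal {k : Type*} [Field k] {n : ℕ}
    (I : Ideal (MvPolynomial (Fin (n+1)) k)) : Prop :=
  ∀ f ∈ I, ∀ m : ℕ, homogeneousComponent m f ∈ I

/-- `I` is unmixed of projective dimension `d`: every associated prime `P` of
`k[x₀,…,xₙ]/I` satisfies `dim k[x₀,…,xₙ]/P = d + 1` (affine Krull dimension). -/
def IsUnmixed (k : Type*) [Field k] {n : ℕ}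
    (I : Ideal (MvPolynomial (Fin (n+1)) k)) (d : ℕ) : Prop :=
  ∀ P ∈ associatedPrimes (MvPolynomial (Fin (n+1)) k)
      (MvPolynomial (Fin (n+1)) k ⧸ I),
    ringKrullDim (MvPolynomial (Fin (n+1)) k ⧸ P) = ((d + 1 : ℕ) : WithBot (WithTop ℕ))

/-!
Extending scalars does not change the Hilbert function, so `k` may be taken infinite. Enlarging `I`
to its saturation changes the Hilbert function only in finitely many degrees and only downwards,
and then a general linear form `l` is a nonzerodivisor modulo `I`. So the Hilbert function of `I` is
the sequence of partial sums of that of the hyperplane section `I + (l)`, whose dimension is one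
less and whose degree is the same. In dimension `0` the Hilbert function of the section vanishes
forever once it vanishes, so its partial sums grow by at least one until they reach the degree `D`:
this gives the bound `min (m + 1) D`, and summing it `d` times gives
`C(m + d + 1, d + 1) - C(m - D + d + 1, d + 1)`.

The degree enters through the `d`-th forward difference of the Hilbert function, which is
eventually equal to `d!` times the leading coefficient of the Hilbert polynomial.
-/

open Filter

section Binomial

lemma ichoose_succ_succ (a : ℤ) (b : ℕ) :
    ichoose (a + 1) (b + 1) = ichoose a b + ichoose a (b + 1) := by
  rcases lt_trichotomy a (-1) with ha | rfl | ha
  · simp only [ichoose, if_pos (show a < 0 by lia), if_pos (show a + 1 < 0 by lia), add_zero]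
  · simp [ichoose]
  · lift a to ℕ using by lia
    simp only [ichoose, if_neg (show ¬(a : ℤ) < 0 by lia),
      if_neg (show ¬(a : ℤ) + 1 < 0 by lia), Int.toNat_natCast, Int.toNat_natCast_add_one]
    exact_mod_cast Nat.choose_succ_succ a b

lemma ichoose_natCast_sub_natCast_self (b D : ℕ) :
    ichoose (b - D) b = if D = 0 then 1 else 0 := by
  rcases Nat.lt_or_ge b D with hbD | hDb
  · rw [ichoose, if_pos (by lia), if_neg (by lia)]
  · rw [ichoose, if_neg (by lia), ← Nat.cast_sub hDb, Int.toNat_natCast]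
    split_ifs with hD
    · simp [hD]
    · exact_mod_cast Nat.choose_eq_zero_of_lt (by lia)

lemma sum_range_ichoose (D d m : ℕ) :
    ∑ i ∈ Finset.range (m + 1), ichoose (i - D + d + 1) (d + 1) =
      ichoose (m - D + (d + 1 : ℕ) + 1) (d + 1 + 1) := by
  induction m with
  | zero =>
    have hleft := ichoose_natCast_sub_natCast_self (d + 1) D
    have hright := ichoose_natCast_sub_natCast_self (d + 1 + 1) D
    push_cast at hleft hright ⊢
    rw [Finset.sum_range_one, show ((0 : ℕ) : ℤ) - D + d + 1 = d + 1 - D by push_cast; ring, hleft,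
      show (0 : ℤ) - D + (d + 1) + 1 = d + 1 + 1 - D by ring, hright]
  | succ m ih =>
    have pascal := ichoose_succ_succ (m - D + (d + 1 : ℕ) + 1) (d + 1)
    rw [Finset.sum_range_succ, ih, show ((m + 1 : ℕ) : ℤ) - D + (d + 1 : ℕ) + 1 =
      m - D + (d + 1 : ℕ) + 1 + 1 by push_cast; ring, pascal, add_comm]
    congr 2
    push_cast
    ring

lemma ichoose_sub_ichoose_one (D m : ℕ) :
    ichoose (m + 1) 1 - ichoose (m - D + 1) 1 = min (m + 1) D := by
  simp only [ichoose, Nat.choose_one_right]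
  split_ifs <;> lia

end Binomial

section ForwardDifference

lemma eventuallyEq_fwdDiff_iter {G : Type*} [AddCommGroup G] {u v : ℕ → G}
    (h : u =ᶠ[atTop] v) (n : ℕ) : (fwdDiff 1)^[n] u =ᶠ[atTop] (fwdDiff 1)^[n] v := by
  induction n with
  | zero => exact h
  | succ n ih =>
    simp only [Function.iterate_succ_apply']
    filter_upwards [ih, (tendsto_add_atTop_nat 1).eventually ih] with m hm hm_succ
    rw [fwdDiff, fwdDiff, hm, hm_succ]

lemma fwdDiff_iter_comp_natCast {R G : Type*} [CommRing R] [AddCommGroup G] (f : R → G)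
    (n m : ℕ) : (fwdDiff 1)^[n] (fun i : ℕ ↦ f i) m = (fwdDiff 1)^[n] f m := by
  simp [fwdDiff_iter_eq_sum_shift]

lemma eventually_fwdDiff_iter_natDegree_eq {R : Type*} [CommRing R] {P : Polynomial R}
    {u : ℕ → R} (h : ∀ᶠ m in atTop, u m = P.eval (m : R)) :
    ∀ᶠ m in atTop, (fwdDiff 1)^[P.natDegree] u m = P.natDegree.factorial * P.leadingCoeff := by
  filter_upwards [eventuallyEq_fwdDiff_iter h P.natDegree] with m hm
  rw [hm, fwdDiff_iter_comp_natCast P.eval, P.fwdDiff_iter_degree_eq_factorial]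
  simp [mul_comm]

lemma fwdDiff_iter_succ_sum_range {G : Type*} [AddCommGroup G] (g : ℕ → G) (n m : ℕ) :
    (fwdDiff 1)^[n + 1] (fun j ↦ ∑ i ∈ Finset.range (j + 1), g i) m =
      (fwdDiff 1)^[n] g (m + 1) := by
  have hdiff : fwdDiff 1 (fun j ↦ ∑ i ∈ Finset.range (j + 1), g i) = fun j ↦ g (j + 1) := by
    ext j
    rw [fwdDiff, Finset.sum_range_succ _ (j + 1), add_sub_cancel_left]
  rw [Function.iterate_succ_apply, hdiff, fwdDiff_iter_comp_add]

lemma min_le_sum_range_of_eventually_le {g : ℕ → ℕ} (hg : ∀ i, g i = 0 → g (i + 1) = 0) {D : ℕ}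
    (hD : ∀ᶠ m in atTop, D ≤ ∑ i ∈ Finset.range m, g i) (m : ℕ) :
    min m D ≤ ∑ i ∈ Finset.range m, g i := by
  by_cases hpos : ∀ i ∈ Finset.range m, 1 ≤ g i
  · exact min_le_of_left_le (by simpa using Finset.card_nsmul_le_sum _ _ 1 hpos)
  · push Not at hpos
    obtain ⟨j, hjm, hj⟩ := hpos
    have hzero : ∀ i ≥ j, g i = 0 := fun i hi ↦ by
      induction i, hi using Nat.le_induction with
      | base => lia
      | succ i _ ih => exact hg i ih
    obtain ⟨N, hDN, hmN⟩ := (hD.and (eventually_ge_atTop m)).exists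
    refine min_le_of_right_le (hDN.trans_eq (Finset.sum_subset ?_ ?_).symm)
    · exact Finset.range_subset_range.2 hmN
    · intro i _ him
      exact hzero i (by simp only [Finset.mem_range] at hjm him; lia)

end ForwardDifference

section Regular

lemma exists_mem_forall_notMem_of_not_le {k E ι : Type*} [Field k] [Infinite k] [AddCommGroup E]
    [Module k E] [Finite ι] (V : Submodule k E) (p : ι → Submodule k E) (h : ∀ i, ¬V ≤ p i) :
    ∃ v ∈ V, ∀ i, v ∉ p i := by
  by_contra! hcover
  obtain ⟨i, hi⟩ := Subspace.exists_eq_top_of_iUnion_eq_univ (p := fun i ↦ (p i).comap V.subtype)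
    (Set.eq_univ_of_forall fun v ↦ Set.mem_iUnion.2 (hcover v v.2))
  exact h i (Submodule.comap_subtype_eq_top.1 hi)

lemma exists_mem_isSMulRegular {k A M : Type*} [Field k] [Infinite k] [CommRing A]
    [IsNoetherianRing A] [Algebra k A] [AddCommGroup M] [Module A M] [Module.Finite A M]
    (V : Submodule k A) (hV : ∀ x : M, (∀ v ∈ V, v • x = 0) → x = 0) :
    ∃ l ∈ V, IsSMulRegular M l := by
  have := (associatedPrimes.finite A M).to_subtype
  have hnot_le (P : associatedPrimes A M) : ¬V ≤ P.1.restrictScalars k := fun hVP ↦ by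
    obtain ⟨hprime, x, hx⟩ := isAssociatedPrime_iff.1 P.2
    have hx0 : x = 0 := hV x fun v hv ↦ by
      simpa [hx, Submodule.mem_colon_singleton] using hVP hv
    exact hprime.ne_top (by simp [hx, hx0])
  obtain ⟨l, hlV, hl⟩ := exists_mem_forall_notMem_of_not_le V _ hnot_le
  refine ⟨l, hlV, isSMulRegular_iff_right_eq_zero_of_smul.2 fun x hlx ↦ ?_⟩
  by_contra hx
  have hmem : l ∈ ⋃ P ∈ associatedPrimes A M, (P : Set A) := by
    rw [biUnion_associatedPrimes_eq_zero_divisors]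
    exact ⟨x, hx, hlx⟩
  obtain ⟨P, hP, hlP⟩ := Set.mem_iUnion₂.1 hmem
  exact hl ⟨P, hP⟩ hlP

end Regular

section GradedAlgebra

lemma finrank_map_add_finrank_inf_ker {k E F : Type*} [Field k] [AddCommGroup E] [Module k E]
    [AddCommGroup F] [Module k F] (f : E →ₗ[k] F) (p : Submodule k E) [Module.Finite k p] :
    Module.finrank k (p.map f) + Module.finrank k ↥(p ⊓ f.ker) = Module.finrank k p := by
  rw [← LinearMap.finrank_range_add_finrank_ker (f.domRestrict p), LinearMap.range_domRestrict,
    LinearMap.ker_domRestrict, ← Submodule.map_comap_subtype, Submodule.finrank_map_subtype_eq]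

variable {k A : Type*} [Field k] [CommRing A] [Algebra k A] (𝒜 : ℕ → Submodule k A)

/-- The degree-`m` piece of `A ⧸ I`, as the image of the degree-`m` piece of `A`; this is the
grading of the quotient when `I` is homogeneous. -/
def gradedPiece (I : Ideal A) (m : ℕ) : Submodule k (A ⧸ I) :=
  (𝒜 m).map (Ideal.Quotient.mkₐ k I).toLinearMap

/-- The Hilbert function of `A ⧸ I` for a graded algebra `A`, generalizing `hilbF`. -/
noncomputable def hilbertFun (I : Ideal A) (m : ℕ) : ℕ :=
  Module.finrank k (gradedPiece 𝒜 I m)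

instance gradedPiece_finite [∀ m, Module.Finite k (𝒜 m)] (I : Ideal A) (m : ℕ) :
    Module.Finite k (gradedPiece 𝒜 I m) :=
  inferInstanceAs (Module.Finite k ((𝒜 m).map _))

variable {𝒜}

lemma mem_gradedPiece {I : Ideal A} {m : ℕ} {x : A ⧸ I} :
    x ∈ gradedPiece 𝒜 I m ↔ ∃ s ∈ 𝒜 m, Ideal.Quotient.mk I s = x :=
  Iff.rfl

lemma map_factorₐ_gradedPiece {I J : Ideal A} (hIJ : I ≤ J) (m : ℕ) :
    (gradedPiece 𝒜 I m).map (Ideal.Quotient.factorₐ k hIJ).toLinearMap = gradedPiece 𝒜 J m := by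
  rw [gradedPiece, ← Submodule.map_comp]
  rfl

lemma hilbertFun_anti [∀ m, Module.Finite k (𝒜 m)] {I J : Ideal A} (hIJ : I ≤ J) (m : ℕ) :
    hilbertFun 𝒜 J m ≤ hilbertFun 𝒜 I m := by
  rw [hilbertFun, ← map_factorₐ_gradedPiece hIJ]
  exact Submodule.finrank_map_le _ _

lemma hilbertFun_congr_of_le [∀ m, Module.Finite k (𝒜 m)] {I J : Ideal A} (hIJ : I ≤ J) {m : ℕ}
    (h : ∀ s ∈ 𝒜 m, s ∈ J → s ∈ I) : hilbertFun 𝒜 J m = hilbertFun 𝒜 I m := by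
  have hker : gradedPiece 𝒜 I m ⊓ (Ideal.Quotient.factorₐ k hIJ).toLinearMap.ker = ⊥ := by
    refine (Submodule.eq_bot_iff _).2 fun x hx ↦ ?_
    obtain ⟨⟨s, hs, rfl⟩, hsJ⟩ := hx
    exact Ideal.Quotient.eq_zero_iff_mem.2 (h s hs (Ideal.Quotient.eq_zero_iff_mem.1 hsJ))
  rw [hilbertFun, hilbertFun, ← finrank_map_add_finrank_inf_ker
    (Ideal.Quotient.factorₐ k hIJ).toLinearMap (gradedPiece 𝒜 I m), hker,
    map_factorₐ_gradedPiece, finrank_bot, add_zero]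

lemma hilbertFun_eq_zero_iff [∀ m, Module.Finite k (𝒜 m)] {I : Ideal A} {m : ℕ} :
    hilbertFun 𝒜 I m = 0 ↔ ∀ s ∈ 𝒜 m, s ∈ I := by
  rw [hilbertFun, Submodule.finrank_eq_zero, Submodule.eq_bot_iff]
  simp [mem_gradedPiece, Ideal.Quotient.eq_zero_iff_mem]

lemma hilbertFun_succ_eq_zero [∀ m, Module.Finite k (𝒜 m)] (hgen : ∀ m, 𝒜 1 ^ m = 𝒜 m)
    {I : Ideal A} {m : ℕ} (h : hilbertFun 𝒜 I m = 0) : hilbertFun 𝒜 I (m + 1) = 0 := by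
  rw [hilbertFun_eq_zero_iff] at h ⊢
  intro s hs
  rw [← hgen, pow_succ, hgen] at hs
  exact Submodule.mul_induction_on hs (fun a ha b _ ↦ I.mul_mem_right _ (h a ha))
    fun _ _ ↦ I.add_mem

lemma mul_mem_of_forall_mem_one_mul_mem (hgen : ∀ m, 𝒜 1 ^ m = 𝒜 m) {J : Ideal A} {f : A}
    (hf : ∀ v ∈ 𝒜 1, v * f ∈ J) {j : ℕ} {r : A} (hr : r ∈ 𝒜 (j + 1)) : r * f ∈ J := by
  rw [← hgen, pow_succ] at hr
  induction hr using Submodule.mul_induction_on' with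
  | mem_mul_mem a _ v hv =>
    rw [mul_assoc]
    exact J.mul_mem_left a (hf v hv)
  | add x _ y _ hx hy =>
    rw [add_mul]
    exact J.add_mem hx hy

variable [GradedAlgebra 𝒜] {J : Ideal A} {l : A} {e : ℕ}

lemma exists_mul_sub_mem_of_mem_span_singleton_sup (hJ : J.IsHomogeneous 𝒜) (hl : l ∈ 𝒜 e)
    {j : ℕ} {s : A} (hs : s ∈ 𝒜 (e + j)) (hsJ : s ∈ Ideal.span {l} ⊔ J) :
    ∃ r ∈ 𝒜 j, s - l * r ∈ J := by
  obtain ⟨r, a, ha, rfl⟩ := Ideal.mem_span_singleton_sup.1 hsJ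
  have hcomp := DirectSum.decompose_of_mem_same 𝒜 hs
  rw [DirectSum.decompose_add, DirectSum.add_apply, Submodule.coe_add, mul_comm r,
    DirectSum.coe_decompose_mul_add_of_left_mem 𝒜 hl] at hcomp
  refine ⟨DirectSum.decompose 𝒜 r j, SetLike.coe_mem _, ?_⟩
  rw [mul_comm r, ← hcomp, add_sub_cancel_left]
  exact hJ _ ha

lemma mem_of_mem_span_singleton_sup_of_lt (hJ : J.IsHomogeneous 𝒜) (hl : l ∈ 𝒜 e)
    {m : ℕ} (hme : m < e) {s : A} (hs : s ∈ 𝒜 m) (hsJ : s ∈ Ideal.span {l} ⊔ J) : s ∈ J := by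
  obtain ⟨r, a, ha, rfl⟩ := Ideal.mem_span_singleton_sup.1 hsJ
  have hcomp := DirectSum.decompose_of_mem_same 𝒜 hs
  rw [DirectSum.decompose_add, DirectSum.add_apply, Submodule.coe_add, mul_comm r,
    DirectSum.coe_decompose_mul_of_left_mem_of_not_le 𝒜 hl hme.not_ge, zero_add] at hcomp
  rw [mul_comm r, ← hcomp]
  exact hJ _ ha

lemma gradedPiece_inf_ker_factorₐ (hJ : J.IsHomogeneous 𝒜) (hl : l ∈ 𝒜 e) (j : ℕ) :
    gradedPiece 𝒜 J (e + j) ⊓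
        (Ideal.Quotient.factorₐ k (le_sup_right : J ≤ Ideal.span {l} ⊔ J)).toLinearMap.ker =
      (gradedPiece 𝒜 J j).map (Algebra.lsmul k k (A ⧸ J) l) := by
  apply le_antisymm
  · rintro _ ⟨⟨s, hs, rfl⟩, hsJ⟩
    obtain ⟨r, hr, hsr⟩ := exists_mul_sub_mem_of_mem_span_singleton_sup hJ hl hs
      (Ideal.Quotient.eq_zero_iff_mem.1 hsJ)
    exact ⟨_, ⟨r, hr, rfl⟩, ((Ideal.Quotient.mk_eq_mk_iff_sub_mem _ _).2 hsr).symm⟩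
  · rintro _ ⟨_, ⟨r, hr, rfl⟩, rfl⟩
    refine ⟨⟨l * r, SetLike.mul_mem_graded hl hr, rfl⟩, Ideal.Quotient.eq_zero_iff_mem.2 ?_⟩
    exact Ideal.mem_sup_left (Ideal.mul_mem_right _ _ (Ideal.mem_span_singleton_self l))

variable [∀ m, Module.Finite k (𝒜 m)]

lemma hilbertFun_add_eq (hJ : J.IsHomogeneous 𝒜) (hl : l ∈ 𝒜 e) (hreg : IsSMulRegular (A ⧸ J) l)
    (j : ℕ) : hilbertFun 𝒜 J (e + j) =
      hilbertFun 𝒜 (Ideal.span {l} ⊔ J) (e + j) + hilbertFun 𝒜 J j := by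
  have hinj : Function.Injective (Algebra.lsmul k k (A ⧸ J) l) := hreg
  rw [hilbertFun, ← finrank_map_add_finrank_inf_ker (Ideal.Quotient.factorₐ k
      (le_sup_right : J ≤ Ideal.span {l} ⊔ J)).toLinearMap, map_factorₐ_gradedPiece,
    gradedPiece_inf_ker_factorₐ hJ hl,
    ← (Submodule.equivMapOfInjective _ hinj (gradedPiece 𝒜 J j)).finrank_eq]
  rfl

lemma hilbertFun_eq_sum_range (hJ : J.IsHomogeneous 𝒜) (hl : l ∈ 𝒜 1)
    (hreg : IsSMulRegular (A ⧸ J) l) (m : ℕ) :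
    hilbertFun 𝒜 J m = ∑ i ∈ Finset.range (m + 1), hilbertFun 𝒜 (Ideal.span {l} ⊔ J) i := by
  induction m with
  | zero =>
    rw [Finset.sum_range_one]
    exact (hilbertFun_congr_of_le le_sup_right fun s hs ↦
      mem_of_mem_span_singleton_sup_of_lt hJ hl one_pos hs).symm
  | succ m ih =>
    rw [Finset.sum_range_succ, ← ih, add_comm m, hilbertFun_add_eq hJ hl hreg, add_comm]

lemma hilbertFun_span_singleton_sup_of_ne (hgen : ∀ m, 𝒜 1 ^ m = 𝒜 m) (hJ : J.IsHomogeneous 𝒜)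
    {f : A} (hf : f ∈ 𝒜 e) (hfJ : ∀ v ∈ 𝒜 1, v * f ∈ J) {m : ℕ} (hme : m ≠ e) :
    hilbertFun 𝒜 (Ideal.span {f} ⊔ J) m = hilbertFun 𝒜 J m := by
  refine hilbertFun_congr_of_le le_sup_right fun s hs hsJ ↦ ?_
  rcases hme.lt_or_gt with hlt | hgt
  · exact mem_of_mem_span_singleton_sup_of_lt hJ hf hlt hs hsJ
  obtain ⟨j, rfl⟩ := Nat.exists_eq_add_of_lt hgt
  obtain ⟨r, hr, hsr⟩ := exists_mul_sub_mem_of_mem_span_singleton_sup hJ hf (j := j + 1) hs hsJ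
  simpa [mul_comm r] using J.add_mem hsr (mul_mem_of_forall_mem_one_mul_mem hgen hfJ hr)

lemma exists_saturated_ge [IsNoetherianRing A] (hgen : ∀ m, 𝒜 1 ^ m = 𝒜 m) {I : Ideal A}
    (hI : I.IsHomogeneous 𝒜) :
    ∃ J ≥ I, J.IsHomogeneous 𝒜 ∧ hilbertFun 𝒜 J =ᶠ[atTop] hilbertFun 𝒜 I ∧
      ∀ f, (∀ v ∈ 𝒜 1, v * f ∈ J) → f ∈ J := by
  obtain ⟨J, ⟨hIJ, hJ, hJI⟩, hmax⟩ := exists_maximal_of_wellFoundedGT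
    (fun J ↦ I ≤ J ∧ J.IsHomogeneous 𝒜 ∧ hilbertFun 𝒜 J =ᶠ[atTop] hilbertFun 𝒜 I)
    ⟨I, le_rfl, hI, .rfl⟩
  refine ⟨J, hIJ, hJ, hJI, fun f hf ↦ hJ.mem_iff.2 fun e ↦ ?_⟩
  have hfe (v) (hv : v ∈ 𝒜 1) : v * DirectSum.decompose 𝒜 f e ∈ J := by
    rw [← DirectSum.coe_decompose_mul_add_of_left_mem 𝒜 hv]
    exact hJ _ (hf v hv)
  refine hmax ⟨hIJ.trans le_sup_right, .sup (Ideal.homogeneous_span 𝒜 _ ?_) hJ, ?_⟩ le_sup_right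
    (Ideal.mem_sup_left (Ideal.mem_span_singleton_self _))
  · simp [SetLike.isHomogeneousElem_coe]
  · filter_upwards [hJI, eventually_ne_atTop e] with m hm hme
    rw [← hm, hilbertFun_span_singleton_sup_of_ne hgen hJ (SetLike.coe_mem _) hfe hme]

lemma exists_hyperplane_section [Infinite k] [IsNoetherianRing A] (hgen : ∀ m, 𝒜 1 ^ m = 𝒜 m)
    {I : Ideal A} (hI : I.IsHomogeneous 𝒜) :
    ∃ H : Ideal A, H.IsHomogeneous 𝒜 ∧
      (∀ m, ∑ i ∈ Finset.range (m + 1), hilbertFun 𝒜 H i ≤ hilbertFun 𝒜 I m) ∧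
      ∀ᶠ m in atTop, hilbertFun 𝒜 I m = ∑ i ∈ Finset.range (m + 1), hilbertFun 𝒜 H i := by
  obtain ⟨J, hIJ, hJ, hJI, hsat⟩ := exists_saturated_ge hgen hI
  obtain ⟨l, hl, hreg⟩ : ∃ l ∈ 𝒜 1, IsSMulRegular (A ⧸ J) l := by
    refine exists_mem_isSMulRegular (𝒜 1) fun x hx ↦ ?_
    obtain ⟨f, rfl⟩ := Ideal.Quotient.mk_surjective x
    exact Ideal.Quotient.eq_zero_iff_mem.2
      (hsat f fun v hv ↦ Ideal.Quotient.eq_zero_iff_mem.1 (hx v hv))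
  have hsum := hilbertFun_eq_sum_range hJ hl hreg
  refine ⟨Ideal.span {l} ⊔ J, .sup (Ideal.homogeneous_span 𝒜 _ ?_) hJ, fun m ↦ ?_, ?_⟩
  · simpa using ⟨1, hl⟩
  · exact (hsum m).symm.trans_le (hilbertFun_anti hIJ m)
  · filter_upwards [hJI] with m hm
    rw [← hm, hsum]

lemma min_le_hilbertFun_of_eventually_le [Infinite k] [IsNoetherianRing A]
    (hgen : ∀ m, 𝒜 1 ^ m = 𝒜 m) {D : ℕ} {I : Ideal A} (hI : I.IsHomogeneous 𝒜)
    (hD : ∀ᶠ m in atTop, D ≤ hilbertFun 𝒜 I m) (m : ℕ) : min (m + 1) D ≤ hilbertFun 𝒜 I m := by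
  obtain ⟨H, -, hsum_le, hsum_eq⟩ := exists_hyperplane_section hgen hI
  have hD_sum : ∀ᶠ m in atTop, D ≤ ∑ i ∈ Finset.range m, hilbertFun 𝒜 H i := by
    rw [← map_add_atTop_eq_nat 1, eventually_map]
    filter_upwards [hD, hsum_eq] with m hDm hm
    rwa [← hm]
  have hzero (i : ℕ) (hi : hilbertFun 𝒜 H i = 0) : hilbertFun 𝒜 H (i + 1) = 0 :=
    hilbertFun_succ_eq_zero hgen hi
  exact (min_le_sum_range_of_eventually_le hzero hD_sum (m + 1)).trans (hsum_le m)

lemma ichoose_sub_ichoose_le_hilbertFun_of_infinite [Infinite k] [IsNoetherianRing A]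
    (hgen : ∀ m, 𝒜 1 ^ m = 𝒜 m) {d D : ℕ} {I : Ideal A} (hI : I.IsHomogeneous 𝒜)
    (hD : ∀ᶠ m in atTop, (D : ℚ) ≤ (fwdDiff 1)^[d] (fun i ↦ (hilbertFun 𝒜 I i : ℚ)) m) (m : ℕ) :
    ichoose (m + d + 1) (d + 1) - ichoose (m - D + d + 1) (d + 1) ≤ hilbertFun 𝒜 I m := by
  induction d generalizing I m with
  | zero =>
    have hmin : min (m + 1) D ≤ hilbertFun 𝒜 I m :=
      min_le_hilbertFun_of_eventually_le hgen hI (hD.mono fun _ ↦ Nat.cast_le.1) m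
    simpa only [Nat.cast_zero, add_zero, zero_add, ichoose_sub_ichoose_one] using mod_cast hmin
  | succ d ih =>
    obtain ⟨H, hH, hsum_le, hsum_eq⟩ := exists_hyperplane_section hgen hI
    have hD_section : ∀ᶠ m in atTop,
        (D : ℚ) ≤ (fwdDiff 1)^[d] (fun i ↦ (hilbertFun 𝒜 H i : ℚ)) m := by
      have hcast : (fun m ↦ (hilbertFun 𝒜 I m : ℚ)) =ᶠ[atTop]
          fun m ↦ ∑ i ∈ Finset.range (m + 1), (hilbertFun 𝒜 H i : ℚ) := by
        filter_upwards [hsum_eq] with m hm using mod_cast hm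
      rw [← map_add_atTop_eq_nat 1, eventually_map]
      filter_upwards [hD, eventuallyEq_fwdDiff_iter hcast (d + 1)] with m hDm hm
      rwa [hm, fwdDiff_iter_succ_sum_range] at hDm
    calc ichoose (m + (d + 1 : ℕ) + 1) (d + 1 + 1) - ichoose (m - D + (d + 1 : ℕ) + 1) (d + 1 + 1)
      _ = ∑ i ∈ Finset.range (m + 1),
          (ichoose (i + d + 1) (d + 1) - ichoose (i - D + d + 1) (d + 1)) := by
        rw [Finset.sum_sub_distrib, sum_range_ichoose D]
        simpa using (sum_range_ichoose 0 d m).symm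
      _ ≤ ∑ i ∈ Finset.range (m + 1), (hilbertFun 𝒜 H i : ℤ) :=
        Finset.sum_le_sum fun i _ ↦ ih hH hD_section i
      _ ≤ hilbertFun 𝒜 I m := mod_cast hsum_le m

end GradedAlgebra

section BaseChange

open scoped TensorProduct

lemma finrank_submodule_baseChange {k E : Type*} (K : Type*) [Field k] [Field K]
    [Algebra k K] [AddCommGroup E] [Module k E] (p : Submodule k E) :
    Module.finrank K (p.baseChange K) = Module.finrank k p := by
  have hinj : Function.Injective (p.subtype.baseChange K) :=
    Module.Flat.lTensor_preserves_injective_linearMap _ p.subtype_injective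
  rw [Submodule.baseChange, LinearMap.finrank_range_of_inj hinj,
    Module.finrank_baseChange]

lemma submodule_baseChange_pow {k A : Type*} (K : Type*) [CommRing k] [CommRing K] [Algebra k K]
    [CommRing A] [Algebra k A] (p : Submodule k A) (m : ℕ) :
    p.baseChange K ^ m = (p ^ m).baseChange K := by
  rw [← p.span_eq, Submodule.span_pow, Submodule.baseChange_span, Submodule.baseChange_span,
    Submodule.span_pow]
  congr 1
  exact (Set.image_pow (Algebra.TensorProduct.includeRight (A := K) (R := k) (B := A)) _ _).symm

variable {k A : Type*} (K : Type*) [Field k] [Field K] [Algebra k K] [CommRing A] [Algebra k A]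
  (𝒜 : ℕ → Submodule k A)

lemma isHomogeneous_map_includeRight [GradedAlgebra 𝒜] {I : Ideal A} (hI : I.IsHomogeneous 𝒜) :
    (I.map (Algebra.TensorProduct.includeRight : A →ₐ[k] K ⊗[k] A)).IsHomogeneous
      fun i ↦ (𝒜 i).baseChange K := by
  obtain ⟨S, rfl⟩ := (Ideal.IsHomogeneous.iff_exists 𝒜 I).1 hI
  rw [Ideal.map_span]
  apply Ideal.homogeneous_span
  rintro _ ⟨_, ⟨⟨x, i, hx⟩, -, rfl⟩, rfl⟩
  exact ⟨i, Submodule.tmul_mem_baseChange_of_mem _ hx⟩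

lemma map_tensorQuotientEquiv_gradedPiece_baseChange (I : Ideal A) (m : ℕ) :
    ((gradedPiece 𝒜 I m).baseChange K).map
        (Algebra.TensorProduct.tensorQuotientEquiv (R := k) K A K I).toLinearMap =
      gradedPiece (fun i ↦ (𝒜 i).baseChange K) (I.map Algebra.TensorProduct.includeRight) m := by
  rw [gradedPiece, gradedPiece, Submodule.baseChange_eq_span, Submodule.baseChange_eq_span,
    Submodule.map_span, Submodule.map_span]
  congr 1
  simp only [Submodule.map_coe, Set.image_image]
  rfl

lemma hilbertFun_baseChange (I : Ideal A) (m : ℕ) :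
    hilbertFun (fun i ↦ (𝒜 i).baseChange K) (I.map Algebra.TensorProduct.includeRight) m =
      hilbertFun 𝒜 I m := by
  rw [hilbertFun, ← map_tensorQuotientEquiv_gradedPiece_baseChange, hilbertFun,
    ← finrank_submodule_baseChange K (gradedPiece 𝒜 I m)]
  exact LinearEquiv.finrank_map_eq
    (Algebra.TensorProduct.tensorQuotientEquiv (R := k) K A K I).toLinearEquiv _

end BaseChange

section StandardGradedAlgebra

variable {k A : Type*} [Field k] [CommRing A] [Algebra k A] {𝒜 : ℕ → Submodule k A}
  [GradedAlgebra 𝒜] [Module.Finite k (𝒜 1)]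

lemma finiteType_of_one_pow_eq (hgen : ∀ m, 𝒜 1 ^ m = 𝒜 m) : Algebra.FiniteType k A := by
  obtain ⟨s, hs⟩ : (𝒜 1).FG := Module.Finite.iff_fg.1 inferInstance
  have hone : 𝒜 1 ≤ (Algebra.adjoin k (s : Set A)).toSubmodule :=
    hs ▸ Algebra.span_le_adjoin k (s : Set A)
  have hle (m : ℕ) : 𝒜 m ≤ (Algebra.adjoin k (s : Set A)).toSubmodule := by
    rw [← hgen]
    induction m with
    | zero => exact Submodule.one_le.2 (one_mem (Algebra.adjoin k (s : Set A)))
    | succ m ih =>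
      rw [pow_succ]
      exact Submodule.mul_le.2 fun x hx y hy ↦ Subalgebra.mul_mem _ (ih hx) (hone hy)
  refine ⟨s, Algebra.toSubmodule_eq_top.1 (top_le_iff.1 ?_)⟩
  rw [← (DirectSum.Decomposition.isInternal 𝒜).submodule_iSup_eq_top]
  exact iSup_le hle

lemma ichoose_sub_ichoose_le_hilbertFun (hgen : ∀ m, 𝒜 1 ^ m = 𝒜 m) {d D : ℕ} {I : Ideal A}
    (hI : I.IsHomogeneous 𝒜)
    (hD : ∀ᶠ m in atTop, (D : ℚ) ≤ (fwdDiff 1)^[d] (fun i ↦ (hilbertFun 𝒜 I i : ℚ)) m) (m : ℕ) :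
    ichoose (m + d + 1) (d + 1) - ichoose (m - D + d + 1) (d + 1) ≤ hilbertFun 𝒜 I m := by
  let K := AlgebraicClosure k
  have hfinite (i : ℕ) : Module.Finite k (𝒜 i) :=
    hgen i ▸ Module.Finite.iff_fg.2 ((Module.Finite.iff_fg.1 inferInstance).pow i)
  have (i : ℕ) : Module.Finite K ((𝒜 i).baseChange K) :=
    inferInstanceAs (Module.Finite K (LinearMap.range _))
  have := finiteType_of_one_pow_eq hgen
  have := Algebra.FiniteType.isNoetherianRing K (TensorProduct k K A)
  have hgen_K (i : ℕ) : (𝒜 1).baseChange K ^ i = (𝒜 i).baseChange K := by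
    rw [submodule_baseChange_pow, hgen]
  have hbound := ichoose_sub_ichoose_le_hilbertFun_of_infinite
    (𝒜 := fun i ↦ (𝒜 i).baseChange K) hgen_K (d := d) (D := D)
    (isHomogeneous_map_includeRight K 𝒜 hI)
  simp only [hilbertFun_baseChange] at hbound
  exact hbound hD m

theorem hilbert_function_lower_bound_general (hgen : ∀ m, 𝒜 1 ^ m = 𝒜 m) {I : Ideal A}
    (hI : I.IsHomogeneous 𝒜) {P : Polynomial ℚ}
    (hP : ∀ᶠ m : ℕ in atTop, (hilbertFun 𝒜 I m : ℚ) = P.eval (m : ℚ)) (m : ℕ) :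
    ichoose (m + P.natDegree + 1) (P.natDegree + 1)
        - ichoose (m - ⌊(P.natDegree.factorial : ℚ) * P.leadingCoeff⌋₊ + P.natDegree + 1)
          (P.natDegree + 1)
      ≤ hilbertFun 𝒜 I m := by
  set D := ⌊(P.natDegree.factorial : ℚ) * P.leadingCoeff⌋₊ with hD
  rcases eq_or_ne D 0 with hD0 | hD0
  · simp [hD0]
  · refine ichoose_sub_ichoose_le_hilbertFun hgen hI ?_ m
    have hD_le : (D : ℚ) ≤ P.natDegree.factorial * P.leadingCoeff :=
      (Nat.le_floor_iff' hD0).1 hD.le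
    filter_upwards [eventually_fwdDiff_iter_natDegree_eq hP] with i hi
    exact hD_le.trans_eq hi.symm

end StandardGradedAlgebra

attribute [local instance] MvPolynomial.gradedAlgebra

lemma isHomogeneous_of_isHomogeneousIdeal {k : Type*} [Field k] {n : ℕ}
    {I : Ideal (MvPolynomial (Fin (n + 1)) k)} (hI : IsHomogeneousIdeal I) :
    I.IsHomogeneous (homogeneousSubmodule (Fin (n + 1)) k) :=
  fun m f hf ↦ (decomposition.decompose'_apply f m ▸ hI f hf m :)

lemma eventually_hilbF_eq_eval_hilbP {k : Type*} [Field k] {n : ℕ}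
    {I : Ideal (MvPolynomial (Fin (n + 1)) k)} (hne : hilbP k I ≠ 0) :
    ∀ᶠ m : ℕ in atTop, (hilbF k I m : ℚ) = (hilbP k I).eval (m : ℚ) := by
  unfold hilbP at hne ⊢
  split_ifs at hne ⊢ with h
  exacts [h.choose_spec, absurd rfl hne]

/-- lower bound for the Hilbert function of an arbitrary homogeneous
ideal of projective dimension `d ≥ 0`. -/
theorem hilbert_function_lower_bound {k : Type*} [Field k] {n d : ℕ}
    (I : Ideal (MvPolynomial (Fin (n+1)) k))
    (hhom : IsHomogeneousIdeal I) (hne : hilbP k I ≠ 0) (hdim : idealDim k I = d) :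
    ∀ m : ℕ, 1 ≤ m →
      ichoose ((m : ℤ) + d + 1) (d + 1)
          - ichoose ((m : ℤ) - idealDeg k I + d + 1) (d + 1)
        ≤ (hilbF k I m : ℤ) := by
  intro m _
  subst hdim
  have : Module.Finite k (homogeneousSubmodule (Fin (n + 1)) k 1) :=
    Module.Finite.iff_fg.2 (homogeneousSubmodule_fg _ _ 1)
  exact hilbert_function_lower_bound_general (homogeneousSubmodule_one_pow k)
    (isHomogeneous_of_isHomogeneousIdeal hhom) (eventually_hilbF_eq_eval_hilbP hne) m
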